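/- If R is a relative m-ovoid of Q⁻(2n+1,q) with respect to 𝒬 and P = ⟨v⟩ is a singular point contained in H (i.e. P ∈ 𝒬), then the number of points of R contained in the hyperplane v^⊥ = {w ∈ V : B(v,w) = 0} equals m(qⁿ − q). -/

import Mathlib

noncomputable section

open Module

variable {F V : Type*} [Field F] [AddCommGroup V] [Module F V]

/-- `P` is a singular point of the quadratic form `Q`, i.e. a `1`-dimensional subspace
spanned by a nonzero singular vector. -/
def IsSingularPoint (Q : QuadraticForm F V) (P : Submodule F V) : Prop :=
  ∃ v : V, v ≠ 0 ∧ Q v = 0 ∧ P = Submodule.span F {v}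

/-- A subspace is totally singular if `Q` vanishes identically on it. -/
def TotallySingular (Q : QuadraticForm F V) (W : Submodule F V) : Prop :=
  ∀ v ∈ W, Q v = 0

/-- A generator is a totally singular subspace of (vector space) dimension `n`. -/
def IsGenerator (Q : QuadraticForm F V) (n : ℕ) (g : Submodule F V) : Prop :=
  TotallySingular Q g ∧ finrank F g = n

/-- The restriction of `Q` to the subspace `U` is nondegenerate. -/
def NondegOn (Q : QuadraticForm F V) (U : Submodule F V) : Prop :=
  ∀ v ∈ U, Q v = 0 → (∀ w ∈ U, QuadraticMap.polar (⇑Q) v w = 0) → v = 0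

/-- The quadratic form `Q` is nondegenerate. -/
def Nondeg (Q : QuadraticForm F V) : Prop :=
  ∀ v : V, Q v = 0 → (∀ w : V, QuadraticMap.polar (⇑Q) v w = 0) → v = 0

/-- `Q` has Witt index `n`: every totally singular subspace has dimension at most `n`
and some totally singular subspace has dimension `n`. -/
def HasWittIndex (Q : QuadraticForm F V) (n : ℕ) : Prop :=
  (∀ W : Submodule F V, TotallySingular Q W → finrank F W ≤ n) ∧
  ∃ W : Submodule F V, TotallySingular Q W ∧ finrank F W = n

/-- A relative `m`-ovoid with respect to the parabolic section cut out by the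
hyperplane `H`: a set `R` of singular points not contained in `H` such that every
generator not contained in `H` contains exactly `m` points of `R`. -/
def IsRelativeMOvoid (Q : QuadraticForm F V) (n : ℕ) (H : Submodule F V) (m : ℕ)
    (R : Set (Submodule F V)) : Prop :=
  (∀ P ∈ R, IsSingularPoint Q P ∧ ¬ P ≤ H) ∧
  ∀ g : Submodule F V, IsGenerator Q n g → ¬ g ≤ H → {P ∈ R | P ≤ g}.ncard = m

/-- The hyperplane `v^⊥ = {w : B(v,w) = 0}`, where `B` is the polar form of `Q`. -/
def vperp (Q : QuadraticForm F V) (v : V) : Submodule F V where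
  carrier := {w | QuadraticMap.polar (⇑Q) v w = 0}
  zero_mem' := QuadraticMap.polar_zero_right Q v
  add_mem' := fun ha hb => by
    simp only [Set.mem_setOf_eq] at *
    rw [QuadraticMap.polar_add_right, ha, hb, add_zero]
  smul_mem' := fun c w hw => by
    simp only [Set.mem_setOf_eq] at *
    rw [QuadraticMap.polar_smul_right, hw, smul_zero]

/-!
Let `U` be totally singular. Whether a vector `y ∈ U^⊥` outside `W^⊥` stays singular after a
translation by the totally singular space `W ⊇ U` is decided by a nonzero linear functional on `W`,
so exactly one in `q` of the vectors of `U^⊥ \ W^⊥` is singular. Taking for `W` a generator (one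
exists above `U` by Chevalley–Warning) gives the number of singular vectors of `U^⊥`; in particular
it depends only on `dim U`. By double counting, so does the number of generators through `U`.

Now let `U ≤ H`. The generators through `U` not contained in `H` therefore cover the singular
vectors of `U^⊥ \ H` equally often. Each of them contains `m` points of `R` and `qⁿ - qⁿ⁻¹` of those
vectors, so the points of `R` in `U^⊥` and the singular vectors in `U^⊥ \ H` are in the ratio
`m : (qⁿ - qⁿ⁻¹)`, and the latter are counted by comparing the singular vectors of `U^⊥` in `V` with
those in `H`. The theorem is the case `U = ⟨v⟩`.
-/

open QuadraticMap Submodule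

section Counting

lemma ncard_mul_eq_ncard_mul {α β : Type*} [Finite α] [Finite β] {S : Set α} {T : Set β}
    (r : α → β → Prop) {a b : ℕ} (ha : ∀ x ∈ S, {y ∈ T | r x y}.ncard = a)
    (hb : ∀ y ∈ T, {x ∈ S | r x y}.ncard = b) : S.ncard * a = T.ncard * b := by
  classical
  obtain ⟨s, rfl⟩ := S.toFinite.exists_finset_coe
  obtain ⟨t, rfl⟩ := T.toFinite.exists_finset_coe
  simp only [Set.ncard_coe_finset]
  refine Finset.card_mul_eq_card_mul r (fun x hx => ?_) (fun y hy => ?_)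
  · rw [← ha x hx, ← Set.ncard_coe_finset, Finset.coe_bipartiteAbove]
    rfl
  · rw [← hb y hy, ← Set.ncard_coe_finset, Finset.coe_bipartiteBelow]
    rfl

lemma mul_ncard_eq_ncard_of_translates {G : Type*} [AddCommGroup G] [Finite G] {W : AddSubgroup G}
    {S T : Set G} {k : ℕ} (hT : ∀ x y, x - y ∈ W → (x ∈ T ↔ y ∈ T)) (hST : S ⊆ T)
    (hS : ∀ y ∈ T, k * {x ∈ S | x - y ∈ W}.ncard = Nat.card W) : k * S.ncard = T.ncard := by
  rcases T.eq_empty_or_nonempty with rfl | ⟨y₀, hy₀⟩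
  · simp [Set.subset_empty_iff.1 hST]
  have card_W_pos : 0 < Nat.card W := Nat.card_pos
  have translates_eq : ∀ x ∈ S, {y ∈ T | x - y ∈ W} = (x - ·) '' (W : Set G) := by
    intro x hx
    ext y
    constructor
    · exact fun h => ⟨x - y, h.2, sub_sub_cancel x y⟩
    · rintro ⟨w, hw, rfl⟩
      have hxw : x - (x - w) ∈ W := by rwa [sub_sub_cancel]
      exact ⟨(hT _ _ hxw).1 (hST hx), hxw⟩
  have double_count : T.ncard * {x ∈ S | x - y₀ ∈ W}.ncard = S.ncard * Nat.card W := by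
    refine ncard_mul_eq_ncard_mul (fun y x => x - y ∈ W) (fun y hy => ?_) (fun x hx => ?_)
    · refine Nat.eq_of_mul_eq_mul_left (Nat.pos_of_mul_pos_right (hS y₀ hy₀ ▸ card_W_pos)) ?_
      rw [hS y hy, hS y₀ hy₀]
    · rw [translates_eq x hx, Set.ncard_image_of_injective _ sub_right_injective]
      exact (Nat.card_coe_set_eq _).symm
  refine Nat.eq_of_mul_eq_mul_right card_W_pos ?_
  rw [mul_assoc, ← double_count, mul_left_comm, hS y₀ hy₀]

lemma ncard_submodule_eq_pow_finrank [FiniteDimensional F V] (U : Submodule F V) :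
    (U : Set V).ncard = Nat.card F ^ finrank F U :=
  (Nat.card_coe_set_eq (U : Set V)).symm.trans (natCard_eq_pow_finrank (K := F) (V := U))

lemma natCard_mul_ncard_fiber {f : V →ₗ[F] F} (hf : f ≠ 0) (a : F) :
    Nat.card F * {x | f x = a}.ncard = Nat.card V := by
  obtain ⟨x₀, hx₀⟩ := f.surjective hf a
  have fiber_eq : {x | f x = a} = (x₀ + ·) '' (f.ker : Set V) := by
    ext x
    simp [← hx₀, LinearMap.mem_ker, ← sub_eq_neg_add, sub_eq_zero]
  have card_quotient : Nat.card (V ⧸ f.ker) = Nat.card F :=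
    Nat.card_congr (f.quotKerEquivOfSurjective (f.surjective hf)).toEquiv
  rw [fiber_eq, Set.ncard_image_of_injective _ (add_right_injective x₀), ← card_quotient,
    ← Nat.card_coe_set_eq, mul_comm]
  exact (card_eq_card_quotient_mul_card f.ker).symm

lemma finrank_inf_add_one_of_not_le [FiniteDimensional F V] {H g : Submodule F V}
    (hH : finrank F H + 1 = finrank F V) (hg : ¬ g ≤ H) :
    finrank F ↥(g ⊓ H) + 1 = finrank F g := by
  have sup_add_inf := finrank_sup_add_finrank_inf_eq g H
  have lt_sup : finrank F H < finrank F ↥(g ⊔ H) :=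
    finrank_lt_finrank_of_lt (right_lt_sup.2 hg)
  have sup_le := finrank_le (g ⊔ H)
  omega

lemma ncard_sdiff_of_not_le [Finite F] [FiniteDimensional F V] {H g : Submodule F V}
    (hH : finrank F H + 1 = finrank F V) (hg : ¬ g ≤ H) :
    ((g : Set V) \ H).ncard = Nat.card F ^ finrank F g - Nat.card F ^ (finrank F g - 1) := by
  have : Finite V := Module.finite_of_finite F
  rw [← finrank_inf_add_one_of_not_le hH hg, Nat.add_sub_cancel,
    finrank_inf_add_one_of_not_le hH hg, ← ncard_submodule_eq_pow_finrank,
    ← ncard_submodule_eq_pow_finrank, ← Set.sdiff_inter_self_eq_sdiff, Set.inter_comm]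
  exact Set.ncard_sdiff Set.inter_subset_left

end Counting

section Isotropy

open MvPolynomial in
lemma exists_mvPolynomial_eval_eq {ι : Type*} [Finite ι] (b : Basis ι F V)
    (Q : QuadraticForm F V) :
    ∃ f : MvPolynomial ι F, f.totalDegree ≤ 2 ∧ ∀ t, eval t f = Q (b.equivFun.symm t) := by
  have := Fintype.ofFinite ι
  obtain ⟨B, rfl⟩ := LinearMap.BilinMap.toQuadraticMap_surjective Q
  refine ⟨∑ i, ∑ j, C (B (b i) (b j)) * (X i * X j), ?_, fun t => ?_⟩
  · refine totalDegree_finsetSum_le fun i _ => totalDegree_finsetSum_le fun j _ => ?_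
    calc (C (B (b i) (b j)) * (X i * X j)).totalDegree
        ≤ 0 + (1 + 1) := by
          refine (totalDegree_mul _ _).trans (add_le_add (totalDegree_C _).le ?_)
          exact (totalDegree_mul _ _).trans (add_le_add (totalDegree_X i).le (totalDegree_X j).le)
      _ = 2 := rfl
  · simp only [map_sum, map_mul, eval_C, eval_X, Basis.equivFun_symm_apply,
      LinearMap.BilinMap.toQuadraticMap_apply, LinearMap.sum_apply, map_smul,
      LinearMap.smul_apply, smul_eq_mul, Finset.mul_sum]
    rw [Finset.sum_comm]
    exact Finset.sum_congr rfl fun i _ => Finset.sum_congr rfl fun j _ => by ring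

lemma not_anisotropic_of_two_lt_finrank [Finite F] (Q : QuadraticForm F V)
    (hV : 2 < finrank F V) : ¬ Q.Anisotropic := by
  classical
  have := Fintype.ofFinite F
  have : FiniteDimensional F V := FiniteDimensional.of_finrank_pos (by omega)
  obtain ⟨p, _⟩ := CharP.exists F
  have : Fact p.Prime := ⟨CharP.char_is_prime F p⟩
  let b := finBasis F V
  obtain ⟨f, hdeg, heval⟩ := exists_mvPolynomial_eval_eq b Q
  have dvd_card : p ∣ Fintype.card {t // MvPolynomial.eval t f = 0} :=
    char_dvd_card_solutions p (by simpa using hdeg.trans_lt hV)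
  have eval_zero : MvPolynomial.eval 0 f = 0 := by rw [heval, map_zero, QuadraticMap.map_zero]
  have one_lt_card : 1 < Fintype.card {t // MvPolynomial.eval t f = 0} :=
    (Fact.out : p.Prime).one_lt.trans_le
      (Nat.le_of_dvd (Fintype.card_pos_iff.2 ⟨⟨0, eval_zero⟩⟩) dvd_card)
  obtain ⟨⟨t, ht⟩, hne⟩ := Fintype.exists_ne_of_one_lt_card one_lt_card ⟨0, eval_zero⟩
  refine (not_anisotropic_iff_exists Q).2 ⟨b.equivFun.symm t, ?_, (heval t).symm.trans ht⟩
  exact b.equivFun.symm.map_ne_zero_iff.2 fun h => hne (Subtype.ext h)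

end Isotropy

section Perp

/-- The subspace `U^⊥` of the vectors orthogonal to `U` with respect to the polar form of `Q`. -/
abbrev perp (Q : QuadraticForm F V) (U : Submodule F V) : Submodule F V :=
  LinearMap.BilinForm.orthogonal (polarBilin Q) U

/-- The singular vectors of `U^⊥`, including `0`; for `U` totally singular these are the vectors
that span a totally singular subspace together with `U`. -/
def perpCone (Q : QuadraticForm F V) (U : Submodule F V) : Set V :=
  {x | x ∈ perp Q U ∧ Q x = 0}

variable {Q : QuadraticForm F V} {U W : Submodule F V}

lemma perp_span_singleton (Q : QuadraticForm F V) (v : V) : perp Q (span F {v}) = vperp Q v := by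
  rw [perp, LinearMap.BilinForm.orthogonal_span_singleton_eq_toLin_ker]
  rfl

lemma perpCone_anti (h : U ≤ W) : perpCone Q W ⊆ perpCone Q U :=
  fun _ hx => ⟨LinearMap.BilinForm.orthogonal_le h hx.1, hx.2⟩

lemma totallySingular_span_singleton {v : V} (hv : Q v = 0) : TotallySingular Q (span F {v}) := by
  intro x hx
  obtain ⟨a, rfl⟩ := mem_span_singleton.1 hx
  simp [QuadraticMap.map_smul, hv]

lemma TotallySingular.le_perp (hU : TotallySingular Q U) : U ≤ perp Q U := by
  intro x hx u hu
  change polar Q u x = 0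
  simp [polar, hU _ (add_mem hu hx), hU _ hu, hU _ hx]

lemma TotallySingular.subset_perpCone (hW : TotallySingular Q W) (hUW : U ≤ W) :
    (W : Set V) ⊆ perpCone Q U :=
  fun x hx => perpCone_anti hUW ⟨hW.le_perp hx, hW x hx⟩

lemma TotallySingular.sup_span_singleton (hU : TotallySingular Q U) {x : V}
    (hx : x ∈ perpCone Q U) : TotallySingular Q (U ⊔ span F {x}) := by
  intro y hy
  obtain ⟨u, hu, w, hw, rfl⟩ := mem_sup.1 hy
  obtain ⟨a, rfl⟩ := mem_span_singleton.1 hw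
  have polar_eq_zero : polar Q u x = 0 := hx.1 u hu
  simp [QuadraticMap.map_add, QuadraticMap.map_smul, hU u hu, hx.2, polar_smul_right,
    polar_eq_zero]

lemma TotallySingular.finrank_add_finrank_perp [FiniteDimensional F V] (hQ : Nondeg Q)
    (hU : TotallySingular Q U) : finrank F U + finrank F (perp Q U) = finrank F V := by
  have polar_refl : (polarBilin Q).IsRefl := fun x y h => by
    rwa [polarBilin_apply_apply, polar_comm] at h
  have radical_eq_bot : U ⊓ perp Q ⊤ = ⊥ := by
    refine eq_bot_iff.2 fun x hx => hQ x (hU x hx.1) fun w => ?_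
    rw [polar_comm]
    exact hx.2 w trivial
  rw [LinearMap.BilinForm.finrank_add_finrank_orthogonal polar_refl U, radical_eq_bot,
    finrank_bot, add_zero]

lemma TotallySingular.exists_mem_perpCone_notMem [Finite F] [FiniteDimensional F V]
    (hQ : Nondeg Q) (hU : TotallySingular Q U) (hd : 2 * finrank F U + 2 < finrank F V) :
    ∃ x ∈ perpCone Q U, x ∉ U := by
  obtain ⟨C, hC⟩ := U.exists_isCompl
  have two_lt : 2 < finrank F ↥(C ⊓ perp Q U) := by
    have sup_add_inf := finrank_sup_add_finrank_inf_eq C (perp Q U)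
    have sup_le := finrank_le (C ⊔ perp Q U)
    have add_perp := hU.finrank_add_finrank_perp hQ
    have add_compl := finrank_add_eq_of_isCompl hC
    omega
  obtain ⟨x, hx0, hxQ⟩ := (not_anisotropic_iff_exists _).1
    (not_anisotropic_of_two_lt_finrank (Q.comp (C ⊓ perp Q U).subtype) two_lt)
  refine ⟨x, ⟨x.2.2, hxQ⟩, fun hxU => hx0 (Subtype.ext ?_)⟩
  exact disjoint_def.1 hC.disjoint x hxU x.2.1

end Perp

section PerpCone

variable {Q : QuadraticForm F V} {U W : Submodule F V}

lemma TotallySingular.natCard_mul_ncard_singular_translates (hW : TotallySingular Q W) {y : V}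
    (hy : y ∉ perp Q W) : Nat.card F * {x | Q x = 0 ∧ x - y ∈ W}.ncard = Nat.card W := by
  let f : W →ₗ[F] F := (polarBilin Q y).domRestrict W
  have f_ne_zero : f ≠ 0 := fun hf => hy fun w hw =>
    (polar_comm Q w y).trans (LinearMap.congr_fun hf ⟨w, hw⟩)
  have map_add_eq : ∀ w : W, Q (y + w) = Q y + f w := fun w => by
    rw [QuadraticMap.map_add Q, hW w w.2, add_zero]
    rfl
  have translates_eq :
      {x | Q x = 0 ∧ x - y ∈ W} = ((y + ·) ∘ Subtype.val) '' {w : W | f w = - Q y} := by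
    ext x
    constructor
    · rintro ⟨hx, hxy⟩
      refine ⟨⟨x - y, hxy⟩, eq_neg_of_add_eq_zero_right ?_, add_sub_cancel y x⟩
      rw [← map_add_eq, add_sub_cancel, hx]
    · rintro ⟨w, hw, rfl⟩
      exact ⟨by rw [Function.comp_apply, map_add_eq, hw, add_neg_cancel], by simp⟩
  rw [translates_eq,
    Set.ncard_image_of_injective _ ((add_right_injective y).comp Subtype.val_injective)]
  exact natCard_mul_ncard_fiber f_ne_zero _

lemma TotallySingular.natCard_mul_ncard_perpCone_sdiff [Finite V]
    (hW : TotallySingular Q W) (hUW : U ≤ W) :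
    Nat.card F * (perpCone Q U \ perpCone Q W).ncard = ((perp Q U : Set V) \ perp Q W).ncard := by
  have perp_sdiff_translate : ∀ x y, x - y ∈ W →
      (x ∈ (perp Q U : Set V) \ perp Q W ↔ y ∈ (perp Q U : Set V) \ perp Q W) := by
    intro x y hxy
    have hxyW : x - y ∈ perp Q W := hW.le_perp hxy
    have hxyU : x - y ∈ perp Q U := LinearMap.BilinForm.orthogonal_le hUW hxyW
    rw [← sub_add_cancel x y]
    exact and_congr (add_mem_cancel_left hxyU) (not_congr (add_mem_cancel_left hxyW))
  refine mul_ncard_eq_ncard_of_translates (W := W.toAddSubgroup) perp_sdiff_translate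
    (fun x hx => ⟨hx.1.1, fun hxW => hx.2 ⟨hxW, hx.1.2⟩⟩) (fun y hy => ?_)
  change _ = Nat.card W
  rw [← hW.natCard_mul_ncard_singular_translates hy.2]
  congr 2
  ext x
  refine ⟨fun h => ⟨h.1.1.2, h.2⟩, fun ⟨hx, hxy⟩ => ⟨?_, hxy⟩⟩
  obtain ⟨hxU, hxW⟩ := (perp_sdiff_translate x y hxy).2 hy
  exact ⟨⟨hxU, hx⟩, fun h => hxW h.1⟩

lemma TotallySingular.natCard_mul_ncard_perpCone_add [Finite F] [FiniteDimensional F V]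
    (hW : TotallySingular Q W) (hUW : U ≤ W) :
    Nat.card F * (perpCone Q U).ncard + Nat.card F ^ finrank F (perp Q W) =
      Nat.card F * (perpCone Q W).ncard + Nat.card F ^ finrank F (perp Q U) := by
  have : Finite V := Module.finite_of_finite F
  have cone := Set.ncard_sdiff_add_ncard_of_subset (perpCone_anti (Q := Q) hUW)
  have perp := Set.ncard_sdiff_add_ncard_of_subset
    (SetLike.coe_subset_coe.2 (LinearMap.BilinForm.orthogonal_le (B := polarBilin Q) hUW))
  rw [← ncard_submodule_eq_pow_finrank, ← ncard_submodule_eq_pow_finrank, ← cone, ← perp,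
    ← hW.natCard_mul_ncard_perpCone_sdiff hUW]
  ring

end PerpCone

section Generators

/-- The generators containing `U`. -/
def generatorsThrough (Q : QuadraticForm F V) (n : ℕ) (U : Submodule F V) :
    Set (Submodule F V) :=
  {g | IsGenerator Q n g ∧ U ≤ g}

variable {Q : QuadraticForm F V} {n : ℕ} {U U' : Submodule F V}

lemma TotallySingular.ncard_perpCone_sdiff [Finite F] [FiniteDimensional F V]
    (hU : TotallySingular Q U) :
    (perpCone Q U \ U).ncard = (perpCone Q U).ncard - Nat.card F ^ finrank F U := by
  have : Finite V := Module.finite_of_finite F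
  rw [← ncard_submodule_eq_pow_finrank, Set.ncard_sdiff (hU.subset_perpCone le_rfl)]

lemma generatorsThrough_eq_singleton [FiniteDimensional F V] (hU : IsGenerator Q n U) :
    generatorsThrough Q n U = {U} := by
  ext g
  constructor
  · rintro ⟨hg, hUg⟩
    exact (eq_of_le_of_finrank_eq hUg (hU.2.trans hg.2.symm)).symm
  · rintro rfl
    exact ⟨hU, le_rfl⟩

lemma ncard_generatorsThrough_mul [Finite F] [FiniteDimensional F V] {c : ℕ}
    (hc : ∀ x ∈ perpCone Q U \ U, (generatorsThrough Q n (U ⊔ span F {x})).ncard = c) :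
    (generatorsThrough Q n U).ncard * (Nat.card F ^ n - Nat.card F ^ finrank F U) =
      (perpCone Q U \ U).ncard * c := by
  have : Finite V := Module.finite_of_finite F
  refine ncard_mul_eq_ncard_mul (fun g x => x ∈ g) (fun g hg => ?_) (fun x hx => ?_)
  · obtain ⟨⟨hgQ, hgn⟩, hUg⟩ := hg
    rw [← hgn, ← ncard_submodule_eq_pow_finrank, ← ncard_submodule_eq_pow_finrank,
      ← Set.ncard_sdiff hUg]
    congr 1
    ext x
    exact ⟨fun h => ⟨h.2, h.1.2⟩, fun h => ⟨⟨hgQ.subset_perpCone hUg h.1, h.2⟩, h.1⟩⟩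
  · rw [← hc x hx]
    congr 1
    ext g
    simp [generatorsThrough, and_assoc]

lemma IsGenerator.perpCone_eq [FiniteDimensional F V]
    (hmax : ∀ W : Submodule F V, TotallySingular Q W → finrank F W ≤ n)
    (hU : IsGenerator Q n U) : perpCone Q U = U := by
  refine Set.Subset.antisymm (fun x hx => ?_) (hU.1.subset_perpCone le_rfl)
  by_contra hxU
  have finrank_le := hmax _ (hU.1.sup_span_singleton hx)
  rw [finrank_sup_span_singleton hxU, hU.2] at finrank_le
  omega

variable [Finite F] [FiniteDimensional F V]

lemma TotallySingular.nonempty_generatorsThrough (hQ : Nondeg Q)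
    (hmax : ∀ W : Submodule F V, TotallySingular Q W → finrank F W ≤ n)
    (hd : 2 * n < finrank F V) (hU : TotallySingular Q U) :
    (generatorsThrough Q n U).Nonempty := by
  have : Finite V := Module.finite_of_finite F
  obtain ⟨g, hUg, hg⟩ :=
    (Set.toFinite {W : Submodule F V | TotallySingular Q W}).exists_le_maximal hU
  refine ⟨g, ⟨hg.prop, (hmax g hg.prop).antisymm ?_⟩, hUg⟩
  by_contra! hlt
  obtain ⟨x, hx, hxg⟩ := hg.prop.exists_mem_perpCone_notMem hQ (by omega)
  exact hxg (hg.le_of_ge (hg.prop.sup_span_singleton hx) le_sup_left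
    (mem_sup_right (mem_span_singleton_self x)))

lemma TotallySingular.ncard_perpCone_add (hQ : Nondeg Q)
    (hmax : ∀ W : Submodule F V, TotallySingular Q W → finrank F W ≤ n)
    {e : ℕ} (hd : finrank F V = 2 * n + 1 + e) (hU : TotallySingular Q U) :
    (perpCone Q U).ncard + Nat.card F ^ (n + e) =
      Nat.card F ^ n + Nat.card F ^ (2 * n + e - finrank F U) := by
  obtain ⟨g, hg, hUg⟩ := hU.nonempty_generatorsThrough hQ hmax (by omega)
  have key := hg.1.natCard_mul_ncard_perpCone_add hUg
  have perp_U := hU.finrank_add_finrank_perp hQ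
  have perp_g := hg.1.finrank_add_finrank_perp hQ
  have U_le := hmax U hU
  rw [hg.2] at perp_g
  rw [hg.perpCone_eq hmax, ncard_submodule_eq_pow_finrank, hg.2,
    show finrank F (perp Q g) = n + e + 1 by omega,
    show finrank F (perp Q U) = 2 * n + e - finrank F U + 1 by omega] at key
  refine Nat.eq_of_mul_eq_mul_left (Nat.card_pos (α := F)) ?_
  rw [mul_add, mul_add, ← pow_succ', key, pow_succ']

lemma ncard_generatorsThrough_congr (hQ : Nondeg Q)
    (hmax : ∀ W : Submodule F V, TotallySingular Q W → finrank F W ≤ n)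
    (hd : 2 * n < finrank F V) (hU : TotallySingular Q U) (hU' : TotallySingular Q U')
    (h : finrank F U = finrank F U') :
    (generatorsThrough Q n U).ncard = (generatorsThrough Q n U').ncard := by
  obtain ⟨e, he⟩ := Nat.exists_eq_add_of_le hd
  induction hj : n - finrank F U generalizing U U' with
  | zero =>
    have hUn : finrank F U = n := (hmax U hU).antisymm (Nat.sub_eq_zero_iff_le.1 hj)
    rw [generatorsThrough_eq_singleton ⟨hU, hUn⟩,
      generatorsThrough_eq_singleton ⟨hU', h ▸ hUn⟩, Set.ncard_singleton, Set.ncard_singleton]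
  | succ j ih =>
    obtain ⟨x₀, hx₀, hx₀U⟩ := hU.exists_mem_perpCone_notMem hQ (by omega)
    have count_sup : ∀ {W : Submodule F V}, TotallySingular Q W → finrank F W = finrank F U →
        ∀ x ∈ perpCone Q W \ W, (generatorsThrough Q n (W ⊔ span F {x})).ncard =
          (generatorsThrough Q n (U ⊔ span F {x₀})).ncard := by
      intro W hW hWU x hx
      have hWx : finrank F ↥(W ⊔ span F {x}) = finrank F U + 1 := by
        rw [finrank_sup_span_singleton hx.2, hWU]
      have hUx₀ := finrank_sup_span_singleton hx₀U
      exact ih (hW.sup_span_singleton hx.1) (hU.sup_span_singleton hx₀) (hWx.trans hUx₀.symm)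
        (by omega)
    have cone := hU.ncard_perpCone_add hQ hmax he
    have cone' := hU'.ncard_perpCone_add hQ hmax he
    have hlt : Nat.card F ^ finrank F U < Nat.card F ^ n :=
      Nat.pow_lt_pow_right Finite.one_lt_card (by omega)
    refine Nat.eq_of_mul_eq_mul_right (Nat.sub_pos_of_lt hlt) ?_
    rw [ncard_generatorsThrough_mul (count_sup hU rfl), h,
      ncard_generatorsThrough_mul (count_sup hU' h.symm), hU.ncard_perpCone_sdiff,
      hU'.ncard_perpCone_sdiff, h, Nat.add_right_cancel (cone.trans (h ▸ cone'.symm))]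

end Generators

section Hyperplane

variable {Q : QuadraticForm F V} {n : ℕ} {H U : Submodule F V}

lemma NondegOn.nondeg_comp_subtype (hH : NondegOn Q H) : Nondeg (Q.comp H.subtype) :=
  fun x hx hpolar => Subtype.ext (hH x x.2 hx fun w hw => hpolar ⟨w, hw⟩)

lemma finrank_le_of_totallySingular_comp_subtype
    (hmax : ∀ W : Submodule F V, TotallySingular Q W → finrank F W ≤ n) (W : Submodule F H)
    (hW : TotallySingular (Q.comp H.subtype) W) : finrank F W ≤ n := by
  rw [← finrank_map_subtype_eq H W]
  refine hmax _ fun x hx => ?_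
  obtain ⟨w, hw, rfl⟩ := hx
  exact hW w hw

lemma perpCone_inter_coe (hUH : U ≤ H) :
    perpCone Q U ∩ H = Subtype.val '' perpCone (Q.comp H.subtype) (U.submoduleOf H) := by
  ext x
  constructor
  · rintro ⟨⟨hxU, hxQ⟩, hxH⟩
    exact ⟨⟨x, hxH⟩, ⟨fun u hu => hxU u hu, hxQ⟩, rfl⟩
  · rintro ⟨x, ⟨hxU, hxQ⟩, rfl⟩
    exact ⟨⟨fun u hu => hxU ⟨u, hUH hu⟩ hu, hxQ⟩, x.2⟩

variable [Finite F] [FiniteDimensional F V]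

lemma TotallySingular.ncard_perpCone_inter_hyperplane
    (hmax : ∀ W : Submodule F V, TotallySingular Q W → finrank F W ≤ n)
    (hH : finrank F H = 2 * n + 1) (hHnd : NondegOn Q H) (hU : TotallySingular Q U)
    (hUH : U ≤ H) : (perpCone Q U ∩ H).ncard = Nat.card F ^ (2 * n - finrank F U) := by
  have hU' : TotallySingular (Q.comp H.subtype) (U.submoduleOf H) := fun x hx => hU x hx
  have count := hU'.ncard_perpCone_add hHnd.nondeg_comp_subtype
    (finrank_le_of_totallySingular_comp_subtype hmax) (e := 0) hH
  rw [(submoduleOfEquivOfLe hUH).finrank_eq, add_zero, add_zero, add_comm] at count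
  rw [perpCone_inter_coe hUH, Set.ncard_image_of_injective _ Subtype.val_injective]
  exact Nat.add_left_cancel count

lemma TotallySingular.ncard_perpCone_sdiff_hyperplane (hn : 1 ≤ n) (hQ : Nondeg Q)
    (hmax : ∀ W : Submodule F V, TotallySingular Q W → finrank F W ≤ n)
    (hV : finrank F V = 2 * n + 2) (hH : finrank F H = 2 * n + 1) (hHnd : NondegOn Q H)
    (hU : TotallySingular Q U) (hUH : U ≤ H) :
    (perpCone Q U \ H).ncard =
      (Nat.card F ^ n - Nat.card F ^ (n - 1)) *
        (Nat.card F ^ (n + 1 - finrank F U) - Nat.card F) := by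
  have : Finite V := Module.finite_of_finite F
  have total := hU.ncard_perpCone_add hQ hmax (e := 1) hV
  rw [← Set.ncard_inter_add_ncard_sdiff_eq_ncard _ (H : Set V),
    hU.ncard_perpCone_inter_hyperplane hmax hH hHnd hUH] at total
  obtain ⟨j, hj⟩ := Nat.exists_eq_add_of_le (hmax U hU)
  obtain ⟨k, rfl⟩ := Nat.exists_eq_add_of_le' hn
  have one_le : 1 ≤ Nat.card F := Nat.card_pos
  rw [show 2 * (k + 1) - finrank F U = k + 1 + j by omega,
    show 2 * (k + 1) + 1 - finrank F U = k + 1 + j + 1 by omega] at total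
  rw [show k + 1 + 1 - finrank F U = j + 1 by omega, Nat.add_sub_cancel]
  zify [Nat.pow_le_pow_right one_le (Nat.le_succ k),
    Nat.le_self_pow (Nat.succ_ne_zero j) (Nat.card F)] at total ⊢
  linear_combination total

end Hyperplane

section RelativeOvoid

variable {Q : QuadraticForm F V} {n m : ℕ} {H U : Submodule F V} {R : Set (Submodule F V)}

lemma setOf_generatorsThrough_not_le_and_le {L : Submodule F V} (hL : ¬ L ≤ H) :
    {g ∈ {g ∈ generatorsThrough Q n U | ¬ g ≤ H} | L ≤ g} = generatorsThrough Q n (U ⊔ L) := by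
  ext g
  constructor
  · rintro ⟨⟨⟨hg, hUg⟩, -⟩, hLg⟩
    exact ⟨hg, sup_le hUg hLg⟩
  · rintro ⟨hg, hULg⟩
    obtain ⟨hUg, hLg⟩ := sup_le_iff.1 hULg
    exact ⟨⟨⟨hg, hUg⟩, fun hgH => hL (hLg.trans hgH)⟩, hLg⟩

variable [Finite F] [FiniteDimensional F V]

lemma exists_ncard_generatorsThrough_sup_span_singleton_eq (hQ : Nondeg Q)
    (hmax : ∀ W : Submodule F V, TotallySingular Q W → finrank F W ≤ n)
    (hd : 2 * n < finrank F V) (hU : TotallySingular Q U) :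
    ∃ c, 0 < c ∧
      ∀ x ∈ perpCone Q U \ U, (generatorsThrough Q n (U ⊔ span F {x})).ncard = c := by
  have : Finite V := Module.finite_of_finite F
  rcases (perpCone Q U \ U).eq_empty_or_nonempty with hempty | ⟨x₀, hx₀, hx₀U⟩
  · exact ⟨1, one_pos, by simp [hempty]⟩
  have hUx₀ := hU.sup_span_singleton hx₀
  refine ⟨_, (Set.ncard_pos).2 (hUx₀.nonempty_generatorsThrough hQ hmax hd), fun x hx => ?_⟩
  exact ncard_generatorsThrough_congr hQ hmax hd (hU.sup_span_singleton hx.1) hUx₀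
    ((finrank_sup_span_singleton hx.2).trans (finrank_sup_span_singleton hx₀U).symm)

lemma ncard_perpCone_sdiff_hyperplane_mul (hH : finrank F H + 1 = finrank F V) {c : ℕ}
    (hc : ∀ x ∈ perpCone Q U \ H, (generatorsThrough Q n (U ⊔ span F {x})).ncard = c) :
    (perpCone Q U \ H).ncard * c =
      {g ∈ generatorsThrough Q n U | ¬ g ≤ H}.ncard * (Nat.card F ^ n - Nat.card F ^ (n - 1)) := by
  have : Finite V := Module.finite_of_finite F
  refine ncard_mul_eq_ncard_mul (fun x g => span F {x} ≤ g) (fun x hx => ?_) (fun g hg => ?_)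
  · rw [← hc x hx, setOf_generatorsThrough_not_le_and_le
      (mt (span_singleton_le_iff_mem x H).1 hx.2)]
  · obtain ⟨⟨⟨hgQ, hgn⟩, hUg⟩, hgH⟩ := hg
    rw [← hgn, ← ncard_sdiff_of_not_le hH hgH]
    congr 1
    ext x
    rw [Set.mem_ofPred_eq, span_singleton_le_iff_mem]
    exact ⟨fun h => ⟨h.2, h.1.2⟩, fun h => ⟨⟨hgQ.subset_perpCone hUg h.1, h.2⟩, h.1⟩⟩

lemma IsRelativeMOvoid.ncard_le_perp_mul (hR : IsRelativeMOvoid Q n H m R) {c : ℕ}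
    (hc : ∀ x ∈ perpCone Q U \ H, (generatorsThrough Q n (U ⊔ span F {x})).ncard = c) :
    {P ∈ R | P ≤ perp Q U}.ncard * c = {g ∈ generatorsThrough Q n U | ¬ g ≤ H}.ncard * m := by
  have : Finite V := Module.finite_of_finite F
  refine ncard_mul_eq_ncard_mul (· ≤ ·) (fun P hP => ?_) (fun g hg => ?_)
  · obtain ⟨⟨x, -, hxQ, rfl⟩, hxH⟩ := hR.1 P hP.1
    rw [setOf_generatorsThrough_not_le_and_le hxH]
    rw [span_singleton_le_iff_mem] at hxH
    exact hc x ⟨⟨hP.2 (mem_span_singleton_self x), hxQ⟩, hxH⟩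
  · obtain ⟨⟨hg, hUg⟩, hgH⟩ := hg
    rw [← hR.2 g hg hgH]
    congr 1
    ext P
    refine ⟨fun h => ⟨h.1.1, h.2⟩, fun h => ⟨⟨h.1, fun x hx => ?_⟩, h.2⟩⟩
    exact (hg.1.subset_perpCone hUg (h.2 hx)).1

end RelativeOvoid

theorem statement_7_general [Finite F] {n m : ℕ} (hn : 1 ≤ n) (hV : finrank F V = 2 * n + 2)
    {Q : QuadraticForm F V} (hQ : Nondeg Q)
    (hmax : ∀ W : Submodule F V, TotallySingular Q W → finrank F W ≤ n)
    {H : Submodule F V} (hH : finrank F H = 2 * n + 1) (hHnd : NondegOn Q H)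
    {R : Set (Submodule F V)} (hR : IsRelativeMOvoid Q n H m R)
    {U : Submodule F V} (hU : TotallySingular Q U) (hUH : U ≤ H) :
    {P ∈ R | P ≤ perp Q U}.ncard = m * (Nat.card F ^ (n + 1 - finrank F U) - Nat.card F) := by
  have : FiniteDimensional F V := FiniteDimensional.of_finrank_pos (by omega)
  obtain ⟨c, c_pos, hc⟩ :=
    exists_ncard_generatorsThrough_sup_span_singleton_eq hQ hmax (by omega) hU
  have hcH : ∀ x ∈ perpCone Q U \ H, (generatorsThrough Q n (U ⊔ span F {x})).ncard = c :=
    fun x hx => hc x ⟨hx.1, fun hxU => hx.2 (hUH hxU)⟩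
  have points := hR.ncard_le_perp_mul hcH
  have vectors := ncard_perpCone_sdiff_hyperplane_mul (H := H) (by omega) hcH
  rw [hU.ncard_perpCone_sdiff_hyperplane hn hQ hmax hV hH hHnd hUH] at vectors
  have affine_pos : 0 < Nat.card F ^ n - Nat.card F ^ (n - 1) :=
    Nat.sub_pos_of_lt (Nat.pow_lt_pow_right Finite.one_lt_card (by omega))
  refine Nat.eq_of_mul_eq_mul_right (Nat.mul_pos affine_pos c_pos) ?_
  linear_combination (Nat.card F ^ n - Nat.card F ^ (n - 1)) * points - m * vectors

/-- If `P = ⟨v⟩` is a singular point of the parabolic section `𝒬 = Q ∩ H`, then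
`v^⊥` contains exactly `m(qⁿ − q)` points of the relative `m`-ovoid `R`. -/
theorem statement_7
    (q n : ℕ) [Fintype F] (hq : Fintype.card F = q) (hn : 2 ≤ n)
    (hV : finrank F V = 2 * n + 2)
    (Q : QuadraticForm F V) (hQnd : Nondeg Q) (hQw : HasWittIndex Q n)
    (H : Submodule F V) (hH : finrank F H = 2 * n + 1) (hHnd : NondegOn Q H)
    (m : ℕ) (R : Set (Submodule F V)) (hR : IsRelativeMOvoid Q n H m R)
    (v : V) (hv0 : v ≠ 0) (hvQ : Q v = 0) (hvH : v ∈ H) :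
    {P ∈ R | P ≤ vperp Q v}.ncard = m * (q ^ n - q) := by
  subst hq
  rw [← perp_span_singleton, ← Nat.card_eq_fintype_card,
    statement_7_general (by omega) hV hQnd hQw.1 hH hHnd hR (totallySingular_span_singleton hvQ)
      ((span_singleton_le_iff_mem v H).2 hvH), finrank_span_singleton hv0, Nat.add_sub_cancel]
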